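/- arXiv:1505.02829 — 4 statements merged into one kernel-verified Lean document; each statement's English description precedes it below -/
import Mathlib

section
/- Let G be a cyclically orientable finite simple graph with n vertices, where n ≥ 2. Then G has at most 2·n − 3 edges. -/
/-!
Every nonempty cyclically orientable graph has a vertex of degree at most two; as cyclic
orientability passes to induced subgraphs, deleting such a vertex gives the bound by induction.

Call a vertex set `D` linking if any two vertices of its outer boundary are joined by a walk with
interior in `D`, and call a vertex far from `D` if it is neither in `D` nor adjacent to it. Let `D`
be maximal among the linking sets that have a far vertex. Adding a boundary vertex to `D` keeps it
linking, so by maximality every boundary vertex is adjacent to every far vertex. Hence adding a far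
vertex keeps `D` linking as well, and the far vertices are pairwise adjacent. So if `r` is far, then
any two neighbours of `r` are adjacent or joined through `D`, and a shortest such walk closes up
through `r` to a chordless cycle. A cyclic orientation directs one of the two edges of this cycle
at `r` towards `r` and the other away from it. This cannot hold for every pair among three edges,
so `r` has degree at most two.
-/

open SimpleGraph

variable {V : Type*}

/-- An orientation of a simple graph `G`: a directed relation choosing, for each
edge of `G`, exactly one of its two possible directions. -/
structure SimpleGraph.Orientation (G : SimpleGraph V) : Type _ where
  dir : V → V → Prop
  dir_adj : ∀ u v, dir u v → G.Adj u v
  adj_iff_dir : ∀ u v, G.Adj u v → (dir u v ↔ ¬ dir v u)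

/-- A closed walk is a chordless cycle if it is a cycle and the only edges of `G`
between vertices of the cycle are the edges of the cycle itself (i.e. it is an
induced cycle). -/
def SimpleGraph.Walk.IsChordlessCycle {G : SimpleGraph V} {v : V} (c : G.Walk v v) : Prop :=
  c.IsCycle ∧ ∀ u w : V, u ∈ c.support → w ∈ c.support → G.Adj u w → s(u, w) ∈ c.edges

/-- A cycle (closed walk) is cyclically oriented by an orientation `o` if all of
its darts point the same way around the cycle. -/
def SimpleGraph.Orientation.IsCyclicOn {G : SimpleGraph V} (o : G.Orientation) {v : V}
    (c : G.Walk v v) : Prop :=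
  (∀ d ∈ c.darts, o.dir d.toProd.1 d.toProd.2) ∨ (∀ d ∈ c.darts, o.dir d.toProd.2 d.toProd.1)

/-- A graph is cyclically orientable if it admits an orientation in which every
chordless cycle is cyclically oriented. -/
def SimpleGraph.CyclicallyOrientable (G : SimpleGraph V) : Prop :=
  ∃ o : G.Orientation, ∀ (v : V) (c : G.Walk v v), c.IsChordlessCycle → o.IsCyclicOn c

/-- A subgraph has no cut vertex if it is connected and remains connected after
the deletion of any single one of its vertices. -/
def SimpleGraph.Subgraph.HasNoCutVertex {G : SimpleGraph V} (H : G.Subgraph) : Prop :=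
  H.coe.Connected ∧ ∀ v ∈ H.verts, (H.deleteVerts {v}).coe.Connected

/-- A block (two-connected component) of `G`: a maximal subgraph of `G` that has
no cut vertex. -/
def SimpleGraph.Subgraph.IsBlock {G : SimpleGraph V} (H : G.Subgraph) : Prop :=
  H.HasNoCutVertex ∧ ∀ H' : G.Subgraph, H ≤ H' → H'.HasNoCutVertex → H' = H

/-- A graph is two-connected if it is connected and the removal of any single
vertex leaves it connected (at least two vertices must be removed to
disconnect it). -/
def SimpleGraph.IsTwoConnected (G : SimpleGraph V) : Prop :=
  G.Connected ∧ ∀ v : V, (G.induce {w : V | w ≠ v}).Connected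

/-- A graph consists of a single cycle: some cycle passes through all its
vertices and uses all its edges. (A cycle has at least 3 vertices.) -/
def SimpleGraph.IsCycleGraph (G : SimpleGraph V) : Prop :=
  ∃ (v : V) (c : G.Walk v v), c.IsCycle ∧ (∀ w : V, w ∈ c.support) ∧
    ∀ e ∈ G.edgeSet, e ∈ c.edges

/-- Two subgraphs meet along the single edge `(x, y)`: their intersection
consists exactly of the vertices `x, y` and the edge between them. -/
def SimpleGraph.Subgraph.MeetAlongSingleEdge {G : SimpleGraph V} (G' C : G.Subgraph)
    (x y : V) : Prop :=
  x ≠ y ∧ (G' ⊓ C).verts = {x, y} ∧ (G' ⊓ C).edgeSet = {s(x, y)}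

namespace CyclicOrientation

variable {W : Type*} {G : SimpleGraph V} {H : SimpleGraph W}

section ChordlessWalk

theorem isChordless_of_length_eq_dist {u v : V} {p : G.Walk u v} (hp : p.length = G.dist u v) :
    p.IsChordless := by
  classical
  have mem_edges_of_isSubwalk {x y : V} (hxy : G.Adj x y) {q : G.Walk x y} (hq : q.IsSubwalk p) :
      s(x, y) ∈ p.edges := by
    have hlength : q.length = 1 :=
      (length_eq_dist_of_subwalk hp hq).trans (dist_eq_one_iff_adj.2 hxy)
    refine hq.edges_subset ?_
    match q, hlength with
    | .cons _ .nil, _ => simp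
  refine Walk.isChordless_iff_forall_mem_edges.2 fun x y hx hy hxy ↦ ?_
  rcases Walk.mem_support_append_iff _ _ |>.1 (p.take_spec hx ▸ hy) with hy | hy
  · rw [Sym2.eq_swap]
    exact mem_edges_of_isSubwalk hxy.symm (q := (p.takeUntil x hx).dropUntil y hy)
      ((Walk.isSubwalk_dropUntil _ hy).trans (p.isSubwalk_takeUntil hx))
  · exact mem_edges_of_isSubwalk hxy (q := (p.dropUntil x hx).takeUntil y hy)
      ((Walk.isSubwalk_takeUntil _ hy).trans (p.isSubwalk_dropUntil hx))

theorem isChordless_map_embedding {u v : V} {p : G.Walk u v} (hp : p.IsChordless) (f : G ↪g H) :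
    (p.map f.toHom).IsChordless := by
  refine Walk.isChordless_iff_forall_mem_edges.2 fun x y hx hy hxy ↦ ?_
  simp only [Walk.support_map, List.mem_map] at hx hy
  obtain ⟨x, hx, rfl⟩ := hx
  obtain ⟨y, hy, rfl⟩ := hy
  rw [Walk.edges_map]
  exact List.mem_map_of_mem (f := Sym2.map f) (hp.mem_edges hx hy (f.map_adj_iff.1 hxy))

theorem exists_isPath_isChordless {u v : V} (p : G.Walk u v) :
    ∃ q : G.Walk u v, q.IsPath ∧ q.IsChordless ∧ q.support ⊆ p.support := by
  let A : Set V := {x | x ∈ p.support}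
  obtain ⟨q, hq⟩ := (p.induce A fun _ ↦ id).reachable.exists_walk_length_eq_dist
  refine ⟨q.map (Embedding.induce A).toHom,
    (q.isPath_of_length_eq_dist hq).map Subtype.val_injective,
    isChordless_map_embedding (isChordless_of_length_eq_dist hq) _, fun x hx ↦ ?_⟩
  obtain ⟨x, -, rfl⟩ := List.mem_map.1 (Walk.support_map (Embedding.induce A).toHom q ▸ hx)
  exact x.2

theorem isChordlessCycle_cons_concat {r a b : V} {p : G.Walk a b} (hp : p.IsPath)
    (hchord : p.IsChordless) (hra : G.Adj r a) (hbr : G.Adj b r) (hab : a ≠ b)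
    (hr : r ∉ p.support) (hends : ∀ x ∈ p.support, G.Adj r x → x = a ∨ x = b) :
    (Walk.cons hra (p.concat hbr)).IsChordlessCycle := by
  constructor
  · refine (Walk.cons_isCycle_iff _ _).2 ⟨hp.concat hr hbr, fun h ↦ ?_⟩
    rw [Walk.edges_concat, List.concat_eq_append, List.mem_append, List.mem_singleton] at h
    rcases h with h | h
    · exact hr (p.fst_mem_support_of_mem_edges h)
    · grind
  · intro x y hx hy hxy
    simp only [Walk.support_cons, Walk.support_concat, List.mem_cons, List.mem_append,
      List.not_mem_nil, or_false] at hx hy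
    simp only [Walk.edges_cons, Walk.edges_concat, List.concat_eq_append, List.mem_cons,
      List.mem_append, List.not_mem_nil, or_false]
    by_cases hxr : x = r
    · subst hxr
      grind [G.irrefl]
    by_cases hyr : y = r
    · subst hyr
      grind [G.irrefl, G.adj_comm]
    · exact .inr (.inl (hchord.mem_edges (by tauto) (by tauto) hxy))

end ChordlessWalk

section Hereditary

theorem cyclicallyOrientable_of_embedding (f : H ↪g G) (hG : G.CyclicallyOrientable) :
    H.CyclicallyOrientable := by
  obtain ⟨o, ho⟩ := hG
  refine ⟨⟨fun u v ↦ o.dir (f u) (f v), fun u v h ↦ f.map_adj_iff.1 (o.dir_adj _ _ h),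
    fun u v h ↦ o.adj_iff_dir _ _ (f.map_adj_iff.2 h)⟩, fun v c hc ↦ ?_⟩
  have hmap : (c.map f.toHom).IsChordlessCycle :=
    ⟨hc.1.map f.injective, fun x y hx hy h ↦ (isChordless_map_embedding
      (Walk.isChordless_iff_forall_mem_edges.2 hc.2) f).mem_edges hx hy h⟩
  refine (ho _ _ hmap).imp (fun h d hd ↦ ?_) (fun h d hd ↦ ?_)
  all_goals
    apply h (f.toHom.mapDart d)
    rw [Walk.darts_map]
    exact List.mem_map_of_mem hd

end Hereditary

section Linking

/-- The outer vertex boundary of `D`, where the cycles through a far vertex enter and leave `D`. -/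
def outerBoundary (G : SimpleGraph V) (D : Set V) : Set V := {v | v ∉ D ∧ ∃ d ∈ D, G.Adj d v}

/-- The vertices at distance at least two from `D`, that is, outside its closed neighbourhood.
They are the candidates for a vertex of degree at most two. -/
def farSet (G : SimpleGraph V) (D : Set V) : Set V := {v | v ∉ D ∧ ∀ d ∈ D, ¬ G.Adj d v}

/-- `u` and `v` are joined by a walk all of whose vertices other than `u` and `v` lie in `D`. Such a
walk closes up through a far vertex `r` adjacent to `u` and `v` without creating new neighbours of
`r`; it need not be a path, so that joined pairs can be concatenated. -/
def JoinedThrough (G : SimpleGraph V) (D : Set V) (u v : V) : Prop :=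
  ∃ p : G.Walk u v, ∀ x ∈ p.support, x = u ∨ x = v ∨ x ∈ D

/-- Any two vertices of the outer boundary of `D` are joined through `D`. Connected sets have this
property, but a disconnected set may have it too. -/
def IsLinking (G : SimpleGraph V) (D : Set V) : Prop :=
  ∀ u ∈ outerBoundary G D, ∀ v ∈ outerBoundary G D, JoinedThrough G D u v

variable {D : Set V} {u v r : V}

theorem JoinedThrough.of_adj (h : G.Adj u v) : JoinedThrough G D u v :=
  ⟨h.toWalk, fun x hx ↦ by simp_all [← or_assoc]⟩

theorem JoinedThrough.symm (h : JoinedThrough G D u v) : JoinedThrough G D v u := by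
  obtain ⟨p, hp⟩ := h
  exact ⟨p.reverse, fun x hx ↦ by grind [Walk.support_reverse]⟩

theorem JoinedThrough.trans_insert {w : V} (huv : JoinedThrough G D u v)
    (hvw : JoinedThrough G D v w) : JoinedThrough G (insert v D) u w := by
  obtain ⟨p, hp⟩ := huv
  obtain ⟨q, hq⟩ := hvw
  exact ⟨p.append q, fun x hx ↦ by grind [Walk.mem_support_append_iff]⟩

theorem isLinking_insert (h : ∀ u ∈ outerBoundary G (insert v D), JoinedThrough G D u v) :
    IsLinking G (insert v D) :=
  fun u hu w hw ↦ (h u hu).trans_insert (h w hw).symm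

theorem mem_outerBoundary_or_adj_of_mem_insert (h : u ∈ outerBoundary G (insert v D)) :
    u ∈ outerBoundary G D ∨ G.Adj u v := by
  grind [outerBoundary, G.adj_comm]

theorem IsLinking.insert_of_mem_outerBoundary (hD : IsLinking G D) (hv : v ∈ outerBoundary G D) :
    IsLinking G (insert v D) :=
  isLinking_insert fun u hu ↦ (mem_outerBoundary_or_adj_of_mem_insert hu).elim
    (fun hu ↦ hD u hu v hv) .of_adj

theorem isLinking_insert_of_outerBoundary_subset (h : outerBoundary G D ⊆ G.neighborSet v) :
    IsLinking G (insert v D) :=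
  isLinking_insert fun _ hu ↦ (mem_outerBoundary_or_adj_of_mem_insert hu).elim
    (fun hu ↦ .of_adj (h hu).symm) .of_adj

theorem exists_maximal_isLinking (G : SimpleGraph V) [Finite V] [Nonempty V] :
    ∃ D, Maximal (fun D ↦ IsLinking G D ∧ (farSet G D).Nonempty) D := by
  refine (Set.toFinite {D | IsLinking G D ∧ (farSet G D).Nonempty}).exists_maximal ⟨∅, ?_, ?_⟩
  · rintro u ⟨-, d, hd, -⟩
    exact hd.elim
  · exact ⟨Classical.arbitrary V, by simp [farSet]⟩

theorem adj_of_mem_farSet (hD : Maximal (fun D ↦ IsLinking G D ∧ (farSet G D).Nonempty) D)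
    (hv : v ∉ D) (hinsert : IsLinking G (insert v D)) (hr : r ∈ farSet G D) (hrv : r ≠ v) :
    G.Adj v r := by
  by_contra hvr
  have hfar : r ∈ farSet G (insert v D) := ⟨by grind [farSet], by grind [farSet]⟩
  exact hv (hD.le_of_ge ⟨hinsert, r, hfar⟩ (Set.subset_insert v D) (Set.mem_insert v D))

theorem joinedThrough_of_adj_mem_farSet
    (hD : Maximal (fun D ↦ IsLinking G D ∧ (farSet G D).Nonempty) D) (hr : r ∈ farSet G D)
    (hu : G.Adj r u) (hv : G.Adj r v) (huv : u ≠ v) : JoinedThrough G D u v := by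
  have hcases {w : V} (hw : G.Adj r w) : w ∈ outerBoundary G D ∨ w ∈ farSet G D := by
    grind [outerBoundary, farSet, G.adj_comm]
  have hboundary {s t : V} (hs : s ∈ outerBoundary G D) (ht : t ∈ farSet G D) : G.Adj s t :=
    adj_of_mem_farSet hD hs.1 (hD.prop.1.insert_of_mem_outerBoundary hs) ht
      (by grind [outerBoundary, farSet])
  have hfar {s t : V} (hs : s ∈ farSet G D) (ht : t ∈ farSet G D) (hst : t ≠ s) : G.Adj s t :=
    adj_of_mem_farSet hD hs.1
      (isLinking_insert_of_outerBoundary_subset fun _ hw ↦ (hboundary hw hs).symm) ht hst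
  rcases hcases hu with hu | hu <;> rcases hcases hv with hv | hv
  · exact hD.prop.1 u hu v hv
  · exact .of_adj (hboundary hu hv)
  · exact .of_adj (hboundary hv hu).symm
  · exact .of_adj (hfar hu hv huv.symm)

end Linking

section Degree

theorem exists_isChordlessCycle_of_joinedThrough {D : Set V} {r a b : V} (hr : r ∈ farSet G D)
    (hra : G.Adj r a) (hbr : G.Adj b r) (hab : a ≠ b) (hjoin : JoinedThrough G D a b) :
    ∃ p : G.Walk a b, (Walk.cons hra (p.concat hbr)).IsChordlessCycle := by
  obtain ⟨w, hw⟩ := hjoin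
  obtain ⟨p, hp, hchord, hsupp⟩ := exists_isPath_isChordless w
  refine ⟨p, isChordlessCycle_cons_concat hp hchord hra hbr hab (fun h ↦ ?_) fun x hx hrx ↦ ?_⟩
  · grind [hw r (hsupp h), farSet, G.irrefl]
  · grind [hw x (hsupp hx), farSet, G.adj_comm]

theorem dir_iff_not_dir_of_isCyclicOn_cons_concat (o : G.Orientation) {r a b : V} {p : G.Walk a b}
    {hra : G.Adj r a} {hbr : G.Adj b r} (h : o.IsCyclicOn (Walk.cons hra (p.concat hbr))) :
    o.dir r a ↔ ¬ o.dir r b := by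
  have hfirst : ⟨(r, a), hra⟩ ∈ (Walk.cons hra (p.concat hbr)).darts := by simp
  have hlast : ⟨(b, r), hbr⟩ ∈ (Walk.cons hra (p.concat hbr)).darts := by simp [Walk.darts_concat]
  rw [← o.adj_iff_dir b r hbr]
  rcases h with h | h
  · exact iff_of_true (h _ hfirst) (h _ hlast)
  · exact iff_of_false ((o.adj_iff_dir a r hra.symm).1 (h _ hfirst))
      ((o.adj_iff_dir r b hbr.symm).1 (h _ hlast))

theorem exists_ncard_neighborSet_le_two [Finite V] [Nonempty V] (hG : G.CyclicallyOrientable) :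
    ∃ r, (G.neighborSet r).ncard ≤ 2 := by
  obtain ⟨o, ho⟩ := hG
  obtain ⟨D, hD⟩ := exists_maximal_isLinking G
  obtain ⟨r, hr⟩ := hD.prop.2
  have hopposite {a b : V} (ha : G.Adj r a) (hb : G.Adj r b) (hab : a ≠ b) :
      o.dir r a ↔ ¬ o.dir r b := by
    obtain ⟨p, hp⟩ := exists_isChordlessCycle_of_joinedThrough hr ha hb.symm hab
      (joinedThrough_of_adj_mem_farSet hD hr ha hb hab)
    exact dir_iff_not_dir_of_isCyclicOn_cons_concat o (ho r _ hp)
  refine ⟨r, not_lt.1 fun hlt ↦ ?_⟩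
  obtain ⟨a, b, c, ha, hb, hc, hab, hac, hbc⟩ := (Set.two_lt_ncard_iff (Set.toFinite _)).1 hlt
  have := hopposite ha hb hab
  have := hopposite ha hc hac
  have := hopposite hb hc hbc
  tauto

end Degree

theorem edgeSet_ncard_le_ncard_neighborSet_add [Finite V] (G : SimpleGraph V) (r : V) :
    G.edgeSet.ncard ≤ (G.neighborSet r).ncard + (G.induce {r}ᶜ).edgeSet.ncard := by
  classical
  have := Fintype.ofFinite V
  have hdelete := G.card_edgeFinset_induce_compl_singleton r
  rw [G.card_edgeFinset_deleteIncidenceSet] at hdelete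
  simp only [← coe_edgeFinset, ← coe_neighborFinset, Set.ncard_coe_finset,
    card_neighborFinset_eq_degree]
  omega

theorem edgeSet_ncard_add_three_le [Fintype V] (hG : G.CyclicallyOrientable)
    (hn : 2 ≤ Fintype.card V) : G.edgeSet.ncard + 3 ≤ 2 * Fintype.card V := by
  classical
  obtain ⟨n, hcard⟩ : ∃ n, Fintype.card V = n + 2 := ⟨_, (Nat.sub_add_cancel hn).symm⟩
  clear hn
  induction n generalizing V with
  | zero =>
    have hle := G.card_edgeFinset_le_card_choose_two
    rw [hcard, zero_add, Nat.choose_self] at hle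
    rw [hcard, ← coe_edgeFinset, Set.ncard_coe_finset]
    omega
  | succ n ih =>
    have : Nonempty V := Fintype.card_pos_iff.1 (by omega)
    obtain ⟨r, hr⟩ := exists_ncard_neighborSet_le_two hG
    have hdelete := edgeSet_ncard_le_ncard_neighborSet_add G r
    have hcompl : Fintype.card ({r}ᶜ : Set V) = n + 2 := by
      rw [Fintype.card_compl_set, Set.card_singleton, hcard]
      omega
    have hih := ih (cyclicallyOrientable_of_embedding (Embedding.induce {r}ᶜ) hG) hcompl
    omega

end CyclicOrientation

/-- A cyclically orientable finite simple graph with `n ≥ 2`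
vertices has at most `2 * n - 3` edges. -/
theorem co_edge_bound {V : Type*} [Fintype V] (G : SimpleGraph V)
    (hn : 2 ≤ Fintype.card V) (hco : G.CyclicallyOrientable) :
    G.edgeSet.ncard ≤ 2 * Fintype.card V - 3 := by
  have := CyclicOrientation.edgeSet_ncard_add_three_le hco hn
  omega
end

section
/- A finite simple graph G is cyclically orientable if and only if every block of G (every maximal subgraph of G without a cut vertex, i.e., every two-connected component) is cyclically orientable. -/
/-!
A union of subgraphs without cut vertex that share two distinct vertices `u`, `v` has no cut vertex:
after the deletion of any vertex, `u` or `v` survives and still joins the parts. Hence the union of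
all subgraphs without cut vertex through `u` and `v`, if there are any, is the unique block through
`u` and `v`. In particular every edge lies in exactly one block, so orientations of the blocks are
the same thing as an orientation of the whole graph.

Deleting a vertex from a cycle leaves a path, so every cycle lies in a block. Blocks are induced
subgraphs, since adding an edge between two vertices creates no cut vertex; therefore the chordless
cycles of `G` are exactly the chordless cycles of its blocks.
-/

open SimpleGraph

variable {V : Type*}

namespace CyclicOrientation

variable {G : SimpleGraph V}

lemma connected_iSup {ι : Sort*} [Nonempty ι] {K : ι → G.Subgraph}
    (hK : ∀ i, (K i).Preconnected) {u : V} (hu : ∀ i, u ∈ (K i).verts) :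
    (⨆ i, K i).Connected := by
  rw [Subgraph.connected_iff', connected_iff_exists_forall_reachable]
  refine ⟨⟨u, Subgraph.verts_mono (le_iSup K (Classical.arbitrary ι)) (hu _)⟩, fun ⟨v, hv⟩ => ?_⟩
  obtain ⟨i, hvi⟩ : ∃ i, v ∈ (K i).verts := by simpa using hv
  exact (hK i ⟨u, hu i⟩ ⟨v, hvi⟩).map (Subgraph.inclusion (le_iSup K i))

lemma deleteVerts_iSup {ι : Sort*} (K : ι → G.Subgraph) (s : Set V) :
    (⨆ i, K i).deleteVerts s = ⨆ i, (K i).deleteVerts s := by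
  ext u v
  · simp
  · simp only [Subgraph.deleteVerts_adj, Subgraph.iSup_adj, Subgraph.verts_iSup, Set.mem_iUnion]
    constructor
    · rintro ⟨-, hu, -, hv, i, h⟩
      exact ⟨i, h.fst_mem, hu, h.snd_mem, hv, h⟩
    · rintro ⟨i, hui, hu, hvi, hv, h⟩
      exact ⟨⟨i, hui⟩, hu, ⟨i, hvi⟩, hv, i, h⟩

lemma deleteVerts_singleton_of_notMem {H : G.Subgraph} {v : V} (hv : v ∉ H.verts) :
    H.deleteVerts {v} = H := by
  rw [← Subgraph.deleteVerts_inter_verts_left_eq, Set.inter_singleton_eq_empty.2 hv,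
    Subgraph.deleteVerts_empty]

lemma HasNoCutVertex.connected_deleteVerts {H : G.Subgraph} (h : H.HasNoCutVertex) (v : V) :
    (H.deleteVerts {v}).Connected := by
  by_cases hv : v ∈ H.verts
  · exact ⟨h.2 v hv⟩
  · rw [deleteVerts_singleton_of_notMem hv]
    exact ⟨h.1⟩

/-- A single vertex does not count as a subgraph without cut vertex: deleting it leaves the empty
graph, which is not connected. -/
lemma HasNoCutVertex.nontrivial {H : G.Subgraph} (h : H.HasNoCutVertex) : H.verts.Nontrivial := by
  obtain ⟨u, hu⟩ := Subgraph.Connected.nonempty ⟨h.1⟩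
  obtain ⟨v, hv, hvu⟩ := (HasNoCutVertex.connected_deleteVerts h u).nonempty
  exact ⟨v, hv, u, hu, hvu⟩

lemma HasNoCutVertex.mono {H K : G.Subgraph} (h : H.HasNoCutVertex) (hle : H ≤ K)
    (hverts : H.verts = K.verts) : K.HasNoCutVertex := by
  refine ⟨(Subgraph.Connected.mono hle hverts ⟨h.1⟩).coe, fun v _ => ?_⟩
  exact ((HasNoCutVertex.connected_deleteVerts h v).mono (Subgraph.deleteVerts_mono hle)
    (by rw [Subgraph.deleteVerts_verts, hverts, Subgraph.deleteVerts_verts])).coe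

lemma HasNoCutVertex.iSup {ι : Sort*} [Nonempty ι] {K : ι → G.Subgraph}
    (hK : ∀ i, (K i).HasNoCutVertex) {u v : V} (huv : u ≠ v) (hu : ∀ i, u ∈ (K i).verts)
    (hv : ∀ i, v ∈ (K i).verts) : (⨆ i, K i).HasNoCutVertex := by
  refine ⟨(connected_iSup (fun i => ⟨(hK i).1.preconnected⟩) hu).coe, fun w _ => ?_⟩
  obtain ⟨x, hxw, hx⟩ : ∃ x, x ≠ w ∧ ∀ i, x ∈ (K i).verts := by
    by_cases huw : u = w
    · exact ⟨v, huw ▸ huv.symm, hv⟩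
    · exact ⟨u, huw, hu⟩
  rw [deleteVerts_iSup]
  exact (connected_iSup (fun i => (HasNoCutVertex.connected_deleteVerts (hK i) w).preconnected)
    fun i => ⟨hx i, hxw⟩).coe

lemma support_tail_dropLast_concat {v : V} {c : G.Walk v v} (hc : ¬ c.Nil) :
    c.tail.dropLast.support ++ [v] = c.support.tail := by
  have htail : ¬ c.tail.Nil := fun h => (c.adj_snd hc).ne' h.eq
  rw [Walk.support_dropLast_concat htail, Walk.support_tail_of_not_nil c hc]

lemma connected_deleteVerts_toSubgraph {v : V} {c : G.Walk v v} (hc : ¬ c.Nil)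
    (hnodup : c.support.tail.Nodup) : (c.toSubgraph.deleteVerts {v}).Connected := by
  have hsupport := support_tail_dropLast_concat hc
  have hv : v ∉ c.tail.dropLast.support := by
    rw [← hsupport, List.nodup_append_comm] at hnodup
    exact (List.nodup_cons.1 hnodup).1
  refine c.tail.dropLast.toSubgraph_connected.mono' (fun x y hxy => ?_) ?_
  · have hx := Walk.mem_support_of_adj_toSubgraph hxy
    have hy := Walk.mem_support_of_adj_toSubgraph hxy.symm
    have hadj : c.toSubgraph.Adj x y := by
      rw [Walk.adj_toSubgraph_iff_mem_edges, Walk.edges_dropLast, Walk.edges_tail] at hxy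
      exact Walk.adj_toSubgraph_iff_mem_edges.2
        (List.mem_of_mem_tail (List.mem_of_mem_dropLast hxy))
    exact Subgraph.deleteVerts_adj.2 ⟨hadj.fst_mem, ne_of_mem_of_not_mem hx hv,
      hadj.snd_mem, ne_of_mem_of_not_mem hy hv, hadj⟩
  · ext x
    simp only [Walk.verts_toSubgraph, Subgraph.deleteVerts_verts, Set.mem_sdiff, Set.mem_ofPred_eq,
      Set.mem_singleton_iff, Walk.mem_support_iff c, ← hsupport, List.mem_append,
      List.mem_singleton]
    grind

/-- Weaker than `IsCycle` on purpose: an edge traversed back and forth is allowed as well. -/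
lemma hasNoCutVertex_toSubgraph {v : V} {c : G.Walk v v} (hc : ¬ c.Nil)
    (hnodup : c.support.tail.Nodup) : c.toSubgraph.HasNoCutVertex := by
  classical
  refine ⟨c.toSubgraph_connected.coe, fun w hw => ?_⟩
  rw [Walk.mem_verts_toSubgraph] at hw
  rw [← Walk.toSubgraph_rotate c hw]
  exact (connected_deleteVerts_toSubgraph (by simpa using hc)
    ((c.support_rotate w hw).nodup_iff.2 hnodup)).coe

lemma hasNoCutVertex_subgraphOfAdj {u v : V} (h : G.Adj u v) :
    (G.subgraphOfAdj h).HasNoCutVertex := by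
  have := hasNoCutVertex_toSubgraph (c := .cons h h.symm.toWalk) (by simp) (by simp [h.ne'])
  simpa [Adj.toSubgraph_toWalk] using this

/-- The union of all subgraphs without cut vertex containing `u` and `v`. For `u ≠ v` it is the
block of `G` containing both vertices, if there is one; otherwise it is empty. -/
def blockThrough (G : SimpleGraph V) (u v : V) : G.Subgraph :=
  ⨆ K : {K : G.Subgraph // K.HasNoCutVertex ∧ u ∈ K.verts ∧ v ∈ K.verts}, K.1

lemma HasNoCutVertex.le_blockThrough {H : G.Subgraph} (h : H.HasNoCutVertex) {u v : V}
    (hu : u ∈ H.verts) (hv : v ∈ H.verts) : H ≤ blockThrough G u v :=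
  le_iSup (fun K : {K : G.Subgraph // K.HasNoCutVertex ∧ u ∈ K.verts ∧ v ∈ K.verts} => K.1)
    ⟨H, h, hu, hv⟩

lemma HasNoCutVertex.hasNoCutVertex_blockThrough {H : G.Subgraph} (h : H.HasNoCutVertex) {u v : V}
    (huv : u ≠ v) (hu : u ∈ H.verts) (hv : v ∈ H.verts) :
    (blockThrough G u v).HasNoCutVertex :=
  have : Nonempty {K : G.Subgraph // K.HasNoCutVertex ∧ u ∈ K.verts ∧ v ∈ K.verts} :=
    ⟨⟨H, h, hu, hv⟩⟩
  HasNoCutVertex.iSup (fun K => K.2.1) huv (fun K => K.2.2.1) (fun K => K.2.2.2)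

lemma IsBlock.blockThrough_eq {B : G.Subgraph} (hB : B.IsBlock) {u v : V} (huv : u ≠ v)
    (hu : u ∈ B.verts) (hv : v ∈ B.verts) : blockThrough G u v = B :=
  hB.2 _ (HasNoCutVertex.le_blockThrough hB.1 hu hv)
    (HasNoCutVertex.hasNoCutVertex_blockThrough hB.1 huv hu hv)

lemma IsBlock.eq_of_adj {B C : G.Subgraph} (hB : B.IsBlock) (hC : C.IsBlock) {u v : V}
    (huvB : B.Adj u v) (huvC : C.Adj u v) : B = C :=
  (IsBlock.blockThrough_eq hB huvB.ne huvB.fst_mem huvB.snd_mem).symm.trans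
    (IsBlock.blockThrough_eq hC huvB.ne huvC.fst_mem huvC.snd_mem)

lemma HasNoCutVertex.exists_isBlock_ge {H : G.Subgraph} (h : H.HasNoCutVertex) :
    ∃ B : G.Subgraph, B.IsBlock ∧ H ≤ B := by
  obtain ⟨u, hu, v, hv, huv⟩ := HasNoCutVertex.nontrivial h
  have hle : H ≤ blockThrough G u v := HasNoCutVertex.le_blockThrough h hu hv
  refine ⟨blockThrough G u v,
    ⟨HasNoCutVertex.hasNoCutVertex_blockThrough h huv hu hv, fun K hK hKcut => ?_⟩, hle⟩
  exact (HasNoCutVertex.le_blockThrough hKcut (hK.1 (hle.1 hu)) (hK.1 (hle.1 hv))).antisymm hK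

lemma IsBlock.isInduced {B : G.Subgraph} (hB : B.IsBlock) : B.IsInduced := by
  intro u hu v hv huv
  have hverts : B.verts = (B ⊔ G.subgraphOfAdj huv).verts := by simp [hu, hv]
  rw [← hB.2 _ le_sup_left (HasNoCutVertex.mono hB.1 le_sup_left hverts)]
  simp

lemma orientation_ext {o o' : G.Orientation} (h : ∀ u v, o.dir u v ↔ o'.dir u v) : o = o' := by
  obtain ⟨dir, _, _⟩ := o
  obtain ⟨dir', _, _⟩ := o'
  obtain rfl : dir = dir' := funext₂ fun u v => propext (h u v)
  rfl

/-- The restriction of an orientation to a subgraph, which need not be induced. -/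
def restrict (o : G.Orientation) (H : G.Subgraph) : H.coe.Orientation where
  dir u v := H.Adj u v ∧ o.dir u v
  dir_adj _ _ h := h.1
  adj_iff_dir u v h := by
    have h : H.Adj u v := h
    simp only [h, h.symm, true_and, o.adj_iff_dir _ _ h.adj_sub]

/-- An orientation witnessing that a graph is cyclically orientable. -/
def IsCyclicOrientation (o : G.Orientation) : Prop :=
  ∀ (v : V) (c : G.Walk v v), c.IsChordlessCycle → o.IsCyclicOn c

lemma exists_map_hom_eq {H : G.Subgraph} {u v : V} {p : G.Walk u v} (hp : p.toSubgraph ≤ H) :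
    ∃ (hu : u ∈ H.verts) (hv : v ∈ H.verts) (q : H.coe.Walk ⟨u, hu⟩ ⟨v, hv⟩), q.map H.hom = p :=
  ⟨hp.1 p.start_mem_verts_toSubgraph, hp.1 p.end_mem_verts_toSubgraph,
    p.mapToSubgraph.map (Subgraph.inclusion hp),
    (Walk.map_map (Subgraph.inclusion hp) H.hom p.mapToSubgraph).trans p.map_mapToSubgraph_hom⟩

lemma isChordlessCycle_map_hom_iff {H : G.Subgraph} (hH : H.IsInduced) {v : H.verts}
    {c : H.coe.Walk v v} : (c.map H.hom).IsChordlessCycle ↔ c.IsChordlessCycle := by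
  have hinj : Function.Injective H.hom := Subgraph.hom_injective
  have mem_support (x : H.verts) : H.hom x ∈ (c.map H.hom).support ↔ x ∈ c.support := by
    rw [Walk.support_map, List.mem_map_of_injective hinj]
  have mem_edges (x y : H.verts) :
      s(H.hom x, H.hom y) ∈ (c.map H.hom).edges ↔ s(x, y) ∈ c.edges := by
    rw [Walk.edges_map, ← Sym2.map_mk, List.mem_map_of_injective (Sym2.map.injective hinj)]
  refine and_congr (Walk.isCycle_map_iff_of_injective hinj) ⟨fun h x y hx hy hxy => ?_,
    fun h x y hx hy hxy => ?_⟩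
  · exact (mem_edges x y).1 (h _ _ ((mem_support x).2 hx) ((mem_support y).2 hy) hxy.adj_sub)
  · rw [Walk.support_map, List.mem_map] at hx hy
    obtain ⟨x, hx, rfl⟩ := hx
    obtain ⟨y, hy, rfl⟩ := hy
    exact (mem_edges x y).2 (h x y hx hy (hH x.2 y.2 hxy))

lemma isCyclicOn_restrict_iff (o : G.Orientation) {H : G.Subgraph} {v : H.verts}
    (c : H.coe.Walk v v) : (restrict o H).IsCyclicOn c ↔ o.IsCyclicOn (c.map H.hom) := by
  unfold Orientation.IsCyclicOn
  simp only [Walk.darts_map, List.forall_mem_map]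
  exact or_congr (forall₂_congr fun d _ => and_iff_right d.adj)
    (forall₂_congr fun d _ => and_iff_right d.adj.symm)

lemma IsCyclicOrientation.restrict {o : G.Orientation} (ho : IsCyclicOrientation o)
    {H : G.Subgraph} (hH : H.IsInduced) :
    IsCyclicOrientation (CyclicOrientation.restrict o H) := fun _ c hc =>
  (isCyclicOn_restrict_iff o c).2 (ho _ _ ((isChordlessCycle_map_hom_iff hH).2 hc))

lemma isCyclicOrientation_of_forall_isBlock {o : G.Orientation}
    (ho : ∀ B : G.Subgraph, B.IsBlock → IsCyclicOrientation (restrict o B)) :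
    IsCyclicOrientation o := by
  intro v c hc
  have hcut : c.toSubgraph.HasNoCutVertex :=
    hasNoCutVertex_toSubgraph hc.1.not_nil hc.1.support_nodup
  obtain ⟨B, hB, hle⟩ := HasNoCutVertex.exists_isBlock_ge hcut
  obtain ⟨_, _, c, rfl⟩ := exists_map_hom_eq hle
  exact (isCyclicOn_restrict_iff o c).1
    (ho B hB _ c ((isChordlessCycle_map_hom_iff (IsBlock.isInduced hB)).1 hc))

section Glue

variable (o : ∀ B : G.Subgraph, B.IsBlock → B.coe.Orientation)

/-- The direction that a family of orientations of the blocks gives to the edges of the graph. The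
block is quantified over instead of chosen; the one containing a given edge is unique. -/
def glueDir (u v : V) : Prop :=
  ∃ (B : G.Subgraph) (hB : B.IsBlock) (h : B.Adj u v), (o B hB).dir ⟨u, h.fst_mem⟩ ⟨v, h.snd_mem⟩

lemma glueDir_iff {B : G.Subgraph} (hB : B.IsBlock) {u v : V} (h : B.Adj u v) :
    glueDir o u v ↔ (o B hB).dir ⟨u, h.fst_mem⟩ ⟨v, h.snd_mem⟩ := by
  refine ⟨?_, fun hdir => ⟨B, hB, h, hdir⟩⟩
  rintro ⟨C, hC, h', hdir⟩
  obtain rfl := IsBlock.eq_of_adj hB hC h h'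
  exact hdir

/-- The orientation of a graph assembled from orientations of its blocks. -/
def glue : G.Orientation where
  dir := glueDir o
  dir_adj := fun _ _ ⟨_, _, h, _⟩ => h.adj_sub
  adj_iff_dir u v huv := by
    obtain ⟨B, hB, hle⟩ :=
      HasNoCutVertex.exists_isBlock_ge (hasNoCutVertex_subgraphOfAdj huv)
    have h : B.Adj u v := hle.2 (by simp)
    rw [glueDir_iff o hB h, glueDir_iff o hB h.symm]
    exact (o B hB).adj_iff_dir _ _ h

lemma restrict_glue {B : G.Subgraph} (hB : B.IsBlock) : restrict (glue o) B = o B hB :=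
  orientation_ext fun u v =>
    ⟨fun ⟨h, hdir⟩ => (glueDir_iff o hB h).1 hdir, fun hdir =>
      have h : B.Adj u v := (o B hB).dir_adj u v hdir
      ⟨h, (glueDir_iff o hB h).2 hdir⟩⟩

end Glue

end CyclicOrientation

open CyclicOrientation in
theorem co_iff_all_blocks_co_general {V : Type*} (G : SimpleGraph V) :
    G.CyclicallyOrientable ↔
      ∀ B : G.Subgraph, B.IsBlock → B.coe.CyclicallyOrientable := by
  constructor
  · rintro ⟨o, ho⟩ B hB
    exact ⟨restrict o B, IsCyclicOrientation.restrict ho (IsBlock.isInduced hB)⟩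
  · intro h
    choose o ho using h
    refine ⟨glue o, isCyclicOrientation_of_forall_isBlock fun B hB => ?_⟩
    rw [restrict_glue o hB]
    exact ho B hB

/-- A finite simple graph is cyclically orientable if and only if
every block of it is cyclically orientable. -/
theorem co_iff_all_blocks_co {V : Type*} [Fintype V] (G : SimpleGraph V) :
    G.CyclicallyOrientable ↔
      ∀ B : G.Subgraph, B.IsBlock → B.coe.CyclicallyOrientable :=
  co_iff_all_blocks_co_general G
end

section
/- Let G be a finite simple graph that decomposes as G = G' ∪ C, where C is a cycle and G' is a subgraph such that G' and C meet along exactly one common edge (their intersection consists of one edge and its two endpoints). Then G is cyclically orientable if and only if G' is cyclically orientable. -/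
/-!
Two subgraphs covering `G` whose intersection is complete are induced subgraphs, so an orientation
of `G` restricts to both with chordless cycles staying chordless. Conversely, a chordless cycle
of `G` lies in one of the two pieces: otherwise it splits into two arcs joining a vertex outside
one piece to a vertex outside the other, each arc meets the intersection in an inner vertex,
and the two vertices so obtained are joined by a chord. Hence good orientations of the pieces that
agree on the intersection glue to a good orientation of `G`, and when the intersection has only one
edge, agreement is achieved by reversing one of them if necessary. Finally, a cycle oriented along
itself has in- and out-degrees at most one, and a trail in such an oriented graph cannot change
direction.
-/

open SimpleGraph

variable {V : Type*}

namespace SimpleGraph.Orientation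

variable {W : Type*} {G : SimpleGraph V} {H : SimpleGraph W}

@[ext]
protected theorem ext {o₁ o₂ : G.Orientation}
    (h : ∀ u v, G.Adj u v → (o₁.dir u v ↔ o₂.dir u v)) : o₁ = o₂ := by
  have hdir : o₁.dir = o₂.dir := by
    ext u v
    exact ⟨fun huv => (h u v (o₁.dir_adj u v huv)).1 huv,
      fun huv => (h u v (o₂.dir_adj u v huv)).2 huv⟩
  cases o₁
  cases o₂
  congr

/-- The pullback of an orientation along a graph homomorphism; along `H.hom` for a subgraph `H`
it is the restriction to `H`. -/
def comap (o : G.Orientation) (f : H →g G) : H.Orientation where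
  dir u v := H.Adj u v ∧ o.dir (f u) (f v)
  dir_adj _ _ h := h.1
  adj_iff_dir u v h := by
    simpa [h, h.symm] using o.adj_iff_dir (f u) (f v) (f.map_adj h)

/-- The orientation with the direction of every edge reversed. -/
def flip (o : G.Orientation) : G.Orientation where
  dir u v := o.dir v u
  dir_adj u v h := (o.dir_adj v u h).symm
  adj_iff_dir u v h := o.adj_iff_dir v u h.symm

/-- The property required in the definition of cyclic orientability: every chordless cycle is
cyclically oriented. -/
def IsCyclic (o : G.Orientation) : Prop :=
  ∀ (v : V) (c : G.Walk v v), c.IsChordlessCycle → o.IsCyclicOn c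

theorem comap_dir_iff (o : G.Orientation) (f : H →g G) {u v : W} (h : H.Adj u v) :
    (o.comap f).dir u v ↔ o.dir (f u) (f v) :=
  and_iff_right h

theorem flip_comap (o : G.Orientation) (f : H →g G) : o.flip.comap f = (o.comap f).flip := by
  ext u v h
  exact (o.flip.comap_dir_iff f h).trans (o.comap_dir_iff f h.symm).symm

theorem isCyclicOn_map_iff (o : G.Orientation) (f : H →g G) {w : W} (c : H.Walk w w) :
    o.IsCyclicOn (c.map f) ↔ (o.comap f).IsCyclicOn c := by
  simp [IsCyclicOn, comap, Dart.adj, fun d : H.Dart => d.adj.symm]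

theorem IsCyclic.flip {o : G.Orientation} (ho : o.IsCyclic) : o.flip.IsCyclic :=
  fun v c hc => (ho v c hc).symm

theorem eq_or_eq_flip_of_subsingleton_edgeSet (hG : G.edgeSet.Subsingleton)
    (o₁ o₂ : G.Orientation) : o₁ = o₂ ∨ o₁ = o₂.flip := by
  refine or_iff_not_imp_left.2 fun hne => ?_
  obtain ⟨u, v, huv, hdir⟩ : ∃ u v, G.Adj u v ∧ ¬(o₁.dir u v ↔ o₂.dir u v) := by
    by_contra! h
    exact hne (Orientation.ext h)
  have h₁ := o₁.adj_iff_dir u v huv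
  have h₂ := o₂.adj_iff_dir u v huv
  ext a b hab
  change o₁.dir a b ↔ o₂.dir b a
  rcases Sym2.eq_iff.1 (hG hab huv) with ⟨rfl, rfl⟩ | ⟨rfl, rfl⟩ <;> tauto

theorem dir_iff_dir_of_biUnique {o : G.Orientation} (ho : Relator.BiUnique o.dir) {a b c : V}
    (hab : G.Adj a b) (hbc : G.Adj b c) (hac : a ≠ c) : o.dir a b ↔ o.dir b c := by
  constructor
  · intro h
    by_contra hn
    exact hac (ho.1 h ((o.adj_iff_dir c b hbc.symm).2 hn))
  · intro h
    by_contra hn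
    exact hac (ho.2 ((o.adj_iff_dir b a hab.symm).2 hn) h)

theorem forall_darts_dir_iff_of_isTrail {o : G.Orientation} (ho : Relator.BiUnique o.dir)
    {a b c : V} (h : G.Adj a b) (p : G.Walk b c) (hp : (p.cons h).IsTrail) :
    ∀ d ∈ p.darts, o.dir d.fst d.snd ↔ o.dir a b := by
  induction p generalizing a with
  | nil => simp
  | @cons b b' c h' q ih =>
    obtain ⟨hq, hmem⟩ := Walk.isTrail_cons h _ |>.1 hp
    have hne : a ≠ b' := by
      rintro rfl
      simp [Sym2.eq_swap] at hmem
    have hturn := dir_iff_dir_of_biUnique ho h h' hne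
    simp only [Walk.darts_cons, List.forall_mem_cons]
    exact ⟨hturn.symm, fun d hd => (ih h' hq d hd).trans hturn.symm⟩

theorem isCyclicOn_of_biUnique {o : G.Orientation} (ho : Relator.BiUnique o.dir) {v : V}
    {c : G.Walk v v} (hc : c.IsTrail) : o.IsCyclicOn c := by
  cases c with
  | nil => simp [IsCyclicOn]
  | @cons _ w _ h p =>
    have hdir := forall_darts_dir_iff_of_isTrail ho h p hc
    simp only [IsCyclicOn, Walk.darts_cons, List.forall_mem_cons]
    by_cases hvw : o.dir v w
    · exact .inl ⟨hvw, fun d hd => (hdir d hd).2 hvw⟩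
    · refine .inr ⟨(o.adj_iff_dir w v h.symm).2 hvw, fun d hd => ?_⟩
      exact (o.adj_iff_dir _ _ d.adj.symm).2 (mt (hdir d hd).1 hvw)

/-- The orientation of a graph along an Eulerian trail. The trail is given by `hp` and `hG` rather
than by `Walk.IsEulerian`, which requires decidable equality of vertices. -/
def ofTrail {u v : V} (p : G.Walk u v) (hp : p.IsTrail) (hG : ∀ e ∈ G.edgeSet, e ∈ p.edges) :
    G.Orientation where
  dir a b := ∃ h : G.Adj a b, ⟨(a, b), h⟩ ∈ p.darts
  dir_adj _ _ h := h.1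
  adj_iff_dir a b hab := by
    constructor
    · rintro ⟨_, h⟩ ⟨_, h'⟩
      exact Dart.symm_ne ⟨(a, b), hab⟩
        (List.inj_on_of_nodup_map hp.edges_nodup h' h (Dart.edge_symm ⟨(a, b), hab⟩))
    · intro hba
      obtain ⟨d, hd, hde⟩ := List.mem_map.1 (hG s(a, b) hab)
      rcases (dart_edge_eq_iff d ⟨(a, b), hab⟩).1 hde with rfl | rfl
      · exact ⟨hab, hd⟩
      · exact absurd ⟨hab.symm, hd⟩ hba

theorem biUnique_ofTrail {v : V} {c : G.Walk v v} (hc : c.IsCycle)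
    (hG : ∀ e ∈ G.edgeSet, e ∈ c.edges) :
    Relator.BiUnique (ofTrail c hc.isTrail hG).dir := by
  have hsnd : (c.darts.map (·.snd)).Nodup := by
    rw [Walk.map_snd_darts]
    exact hc.support_nodup
  have hfst : (c.darts.map (·.fst)).Nodup := by
    rw [Walk.map_fst_darts]
    exact c.tail_support_perm_dropLast_support.nodup_iff.1 hc.support_nodup
  constructor
  · rintro a b w ⟨_, h⟩ ⟨_, h'⟩
    exact congrArg (·.fst) (List.inj_on_of_nodup_map hsnd h h' rfl)
  · rintro a b w ⟨_, h⟩ ⟨_, h'⟩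
    exact congrArg (·.snd) (List.inj_on_of_nodup_map hfst h h' rfl)

end SimpleGraph.Orientation

theorem SimpleGraph.IsCycleGraph.cyclicallyOrientable {G : SimpleGraph V} (hG : G.IsCycleGraph) :
    G.CyclicallyOrientable := by
  obtain ⟨_, c, hc, -, hedges⟩ := hG
  exact ⟨.ofTrail c hc.isTrail hedges, fun _ _ hd =>
    Orientation.isCyclicOn_of_biUnique (Orientation.biUnique_ofTrail hc hedges) hd.1.isTrail⟩

theorem eq_or_eq_of_isCycle_append {G : SimpleGraph V} {a b z : V} {p : G.Walk a b}
    {q : G.Walk b a} (hpq : (p.append q).IsCycle) (hp : z ∈ p.support) (hq : z ∈ q.support) :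
    z = a ∨ z = b := by
  have hnodup := hpq.support_nodup
  rw [Walk.tail_support_append] at hnodup
  by_contra! hz
  exact List.disjoint_of_nodup_append hnodup ((p.mem_support_iff.1 hp).resolve_left hz.1)
    ((q.mem_support_iff.1 hq).resolve_left hz.2)

namespace SimpleGraph.Walk.IsChordlessCycle

variable {W : Type*} {G : SimpleGraph V} {H : SimpleGraph W}

theorem map (f : H ↪g G) {w : W} {c : H.Walk w w} (hc : c.IsChordlessCycle) :
    (c.map f.toHom).IsChordlessCycle := by
  refine ⟨hc.1.map f.injective, fun u v hu hv huv => ?_⟩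
  rw [Walk.support_map, List.mem_map] at hu hv
  obtain ⟨a, ha, rfl⟩ := hu
  obtain ⟨b, hb, rfl⟩ := hv
  rw [Walk.edges_map]
  exact List.mem_map_of_mem (f := Sym2.map f) (hc.2 a b ha hb (f.map_adj_iff.1 huv))

theorem of_map {f : H →g G} (hf : Function.Injective f) {w : W} {c : H.Walk w w}
    (hc : (c.map f).IsChordlessCycle) : c.IsChordlessCycle := by
  refine ⟨(Walk.isCycle_map_iff_of_injective hf).1 hc.1, fun a b ha hb hab => ?_⟩
  have hmem : s(f a, f b) ∈ (c.map f).edges := by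
    refine hc.2 _ _ ?_ ?_ (f.map_adj hab) <;> rw [Walk.support_map]
    exacts [List.mem_map_of_mem ha, List.mem_map_of_mem hb]
  rw [Walk.edges_map] at hmem
  exact (List.mem_map_of_injective (Sym2.map.injective hf) (a := s(a, b))).1 hmem

theorem rotate [DecidableEq V] {v a : V} {c : G.Walk v v} (hc : c.IsChordlessCycle)
    (ha : a ∈ c.support) : (c.rotate a ha).IsChordlessCycle := by
  refine ⟨hc.1.rotate ha, fun u w hu hw huw => (c.rotate_edges a ha).mem_iff.2 ?_⟩
  rw [Walk.mem_support_rotate_iff] at hu hw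
  exact hc.2 u w hu hw huw

theorem exists_append {v a b : V} {c : G.Walk v v} (hc : c.IsChordlessCycle)
    (ha : a ∈ c.support) (hb : b ∈ c.support) :
    ∃ (p : G.Walk a b) (q : G.Walk b a), (p.append q).IsChordlessCycle := by
  classical
  have hb' : b ∈ (c.rotate a ha).support := (c.mem_support_rotate_iff a ha).2 hb
  refine ⟨(c.rotate a ha).takeUntil b hb', (c.rotate a ha).dropUntil b hb', ?_⟩
  rw [Walk.take_spec]
  exact hc.rotate ha

theorem not_adj_of_append {a b z w : V} {p : G.Walk a b} {q : G.Walk b a}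
    (hc : (p.append q).IsChordlessCycle) (hz : z ∈ p.support) (hw : w ∈ q.support)
    (hza : z ≠ a) (hzb : z ≠ b) (hwa : w ≠ a) (hwb : w ≠ b) : ¬G.Adj z w := by
  intro hzw
  have hmem := hc.2 z w ((Walk.mem_support_append_iff p q).2 (.inl hz))
    ((Walk.mem_support_append_iff p q).2 (.inr hw)) hzw
  rw [Walk.edges_append, List.mem_append] at hmem
  rcases hmem with h | h
  · have := eq_or_eq_of_isCycle_append hc.1 (p.snd_mem_support_of_mem_edges h) hw
    tauto
  · have := eq_or_eq_of_isCycle_append hc.1 hz (q.fst_mem_support_of_mem_edges h)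
    tauto

end SimpleGraph.Walk.IsChordlessCycle

theorem SimpleGraph.Orientation.IsCyclic.comap {W : Type*} {G : SimpleGraph V} {H : SimpleGraph W}
    {o : G.Orientation} (ho : o.IsCyclic) (f : H ↪g G) : (o.comap f.toHom).IsCyclic :=
  fun _ c hc => (o.isCyclicOn_map_iff f.toHom c).1 (ho _ _ (hc.map f))

theorem SimpleGraph.CyclicallyOrientable.coe_of_isInduced {G : SimpleGraph V} {H : G.Subgraph}
    (hG : G.CyclicallyOrientable) (hH : H.IsInduced) : H.coe.CyclicallyOrientable := by
  obtain ⟨o, ho⟩ := hG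
  let f : H.coe ↪g G := ⟨⟨(↑), Subtype.coe_injective⟩, hH.adj.symm⟩
  exact ⟨o.comap f.toHom, Orientation.IsCyclic.comap ho f⟩

theorem SimpleGraph.Orientation.IsCyclic.isCyclicOn_of_support_subset {G : SimpleGraph V}
    {H : G.Subgraph} {o : G.Orientation} (ho : (o.comap H.hom).IsCyclic) (hH : H.IsInduced)
    {v : V} {c : G.Walk v v} (hc : c.IsChordlessCycle) (hsub : ∀ u ∈ c.support, u ∈ H.verts) :
    o.IsCyclicOn c := by
  have hle : c.toSubgraph ≤ H := by
    rw [← hH.induce_top_verts]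
    exact c.toSubgraph_le_induce_support.trans (Subgraph.induce_mono_right hsub)
  have hmap : (c.mapToSubgraph.map (Subgraph.inclusion hle)).map H.hom = c := by
    rw [Walk.map_map]
    exact c.map_mapToSubgraph_hom
  rw [← hmap] at hc ⊢
  exact (o.isCyclicOn_map_iff _ _).2 (ho _ _ (hc.of_map Subgraph.hom_injective))

theorem SimpleGraph.Orientation.dir_iff_dir_of_comap_inclusion_eq {G : SimpleGraph V}
    {H K : G.Subgraph} {oH : H.coe.Orientation} {oK : K.coe.Orientation}
    (hagree : oH.comap (Subgraph.inclusion inf_le_left : (H ⊓ K).coe →g H.coe) =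
      oK.comap (Subgraph.inclusion inf_le_right))
    {u v : V} (hH : H.Adj u v) (hK : K.Adj u v) :
    oH.dir ⟨u, hH.fst_mem⟩ ⟨v, hH.snd_mem⟩ ↔ oK.dir ⟨u, hK.fst_mem⟩ ⟨v, hK.snd_mem⟩ := by
  let a : (H ⊓ K).verts := ⟨u, hH.fst_mem, hK.fst_mem⟩
  let b : (H ⊓ K).verts := ⟨v, hH.snd_mem, hK.snd_mem⟩
  have hab : (H ⊓ K).coe.Adj a b := ⟨hH, hK⟩
  exact (oH.comap_dir_iff _ hab).symm.trans (hagree ▸ oK.comap_dir_iff _ hab)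

theorem SimpleGraph.Orientation.exists_comap_hom_eq {G : SimpleGraph V} {H K : G.Subgraph}
    (hsup : H ⊔ K = ⊤) (oH : H.coe.Orientation) (oK : K.coe.Orientation)
    (hagree : oH.comap (Subgraph.inclusion inf_le_left : (H ⊓ K).coe →g H.coe) =
      oK.comap (Subgraph.inclusion inf_le_right)) :
    ∃ o : G.Orientation, o.comap H.hom = oH ∧ o.comap K.hom = oK := by
  let dir (u v : V) : Prop :=
    (∃ h : H.Adj u v, oH.dir ⟨u, h.fst_mem⟩ ⟨v, h.snd_mem⟩) ∨
      ∃ h : K.Adj u v, oK.dir ⟨u, h.fst_mem⟩ ⟨v, h.snd_mem⟩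
  have hdirH {u v : V} (h : H.Adj u v) : dir u v ↔ oH.dir ⟨u, h.fst_mem⟩ ⟨v, h.snd_mem⟩ :=
    ⟨fun huv => huv.elim (fun ⟨_, h'⟩ => h')
      fun ⟨hK, h'⟩ => (dir_iff_dir_of_comap_inclusion_eq hagree h hK).2 h',
      fun h' => .inl ⟨h, h'⟩⟩
  have hdirK {u v : V} (h : K.Adj u v) : dir u v ↔ oK.dir ⟨u, h.fst_mem⟩ ⟨v, h.snd_mem⟩ :=
    ⟨fun huv => huv.elim
      (fun ⟨hH, h'⟩ => (dir_iff_dir_of_comap_inclusion_eq hagree hH h).1 h') fun ⟨_, h'⟩ => h',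
      fun h' => .inr ⟨h, h'⟩⟩
  let o : G.Orientation :=
    { dir := dir
      dir_adj := fun u v h => h.elim (fun ⟨h, _⟩ => h.adj_sub) fun ⟨h, _⟩ => h.adj_sub
      adj_iff_dir := fun u v h => by
        have hcover : (H ⊔ K).Adj u v := hsup ▸ h
        rcases hcover with h | h
        · rw [hdirH h, hdirH h.symm]
          exact oH.adj_iff_dir _ _ h
        · rw [hdirK h, hdirK h.symm]
          exact oK.adj_iff_dir _ _ h }
  refine ⟨o, ?_, ?_⟩
  · ext u v h
    exact (o.comap_dir_iff _ h).trans (hdirH h)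
  · ext u v h
    exact (o.comap_dir_iff _ h).trans (hdirK h)

/-- `G` is the clique sum of its subgraphs `H` and `K`: they cover `G` and their intersection is
complete. Unlike in some versions of the notion, no edge of the common clique is deleted. -/
structure IsCliqueSum {G : SimpleGraph V} (H K : G.Subgraph) : Prop where
  sup_eq_top : H ⊔ K = ⊤
  pairwise_adj_inf : (H ⊓ K).verts.Pairwise (H ⊓ K).Adj

namespace IsCliqueSum

variable {G : SimpleGraph V} {H K : G.Subgraph}

theorem symm (h : IsCliqueSum H K) : IsCliqueSum K H where
  sup_eq_top := sup_comm H K ▸ h.sup_eq_top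
  pairwise_adj_inf := inf_comm H K ▸ h.pairwise_adj_inf

theorem adj_or_adj (h : IsCliqueSum H K) {u v : V} (huv : G.Adj u v) : H.Adj u v ∨ K.Adj u v := by
  rw [← Subgraph.sup_adj, h.sup_eq_top]
  exact huv

theorem mem_verts_or_mem_verts (h : IsCliqueSum H K) (v : V) : v ∈ H.verts ∨ v ∈ K.verts := by
  rw [← Set.mem_union, ← Subgraph.verts_sup, h.sup_eq_top]
  trivial

theorem isInduced_left (h : IsCliqueSum H K) : H.IsInduced := by
  intro u hu v hv huv
  rcases h.adj_or_adj huv with hH | hK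
  · exact hH
  · exact (h.pairwise_adj_inf ⟨hu, hK.fst_mem⟩ ⟨hv, hK.snd_mem⟩ huv.ne).1

theorem exists_mem_support_mem_inf (h : IsCliqueSum H K) {a b : V} (p : G.Walk a b)
    (ha : a ∈ H.verts) (hb : b ∉ H.verts) : ∃ z ∈ p.support, z ∈ (H ⊓ K).verts := by
  obtain ⟨d, hd, hfst, hsnd⟩ := p.exists_boundary_dart H.verts ha hb
  refine ⟨d.fst, p.dart_fst_mem_support_of_mem_darts hd, hfst, ?_⟩
  exact ((h.adj_or_adj d.adj).resolve_left fun hadj => hsnd hadj.snd_mem).fst_mem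

theorem support_subset_or_support_subset (h : IsCliqueSum H K) {v : V} {c : G.Walk v v}
    (hc : c.IsChordlessCycle) :
    (∀ u ∈ c.support, u ∈ H.verts) ∨ (∀ u ∈ c.support, u ∈ K.verts) := by
  by_contra! hout
  obtain ⟨⟨b, hb, hbH⟩, a, ha, haK⟩ := hout
  have haH : a ∈ H.verts := (h.mem_verts_or_mem_verts a).resolve_right haK
  obtain ⟨p, q, hpq⟩ := hc.exists_append ha hb
  obtain ⟨z, hzp, hz⟩ := h.exists_mem_support_mem_inf p haH hbH
  obtain ⟨w, hwq, hw⟩ := h.exists_mem_support_mem_inf q.reverse haH hbH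
  rw [Walk.support_reverse, List.mem_reverse] at hwq
  have hne_a {t : V} (ht : t ∈ (H ⊓ K).verts) : t ≠ a := fun hta => haK (hta ▸ ht.2)
  have hne_b {t : V} (ht : t ∈ (H ⊓ K).verts) : t ≠ b := fun htb => hbH (htb ▸ ht.1)
  have hzw : z ≠ w := by
    rintro rfl
    exact (eq_or_eq_of_isCycle_append hpq.1 hzp hwq).elim (hne_a hz) (hne_b hz)
  exact hpq.not_adj_of_append hzp hwq (hne_a hz) (hne_b hz) (hne_a hw) (hne_b hw)
    (h.pairwise_adj_inf hz hw hzw).adj_sub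

theorem isCyclic_of_comap_hom (h : IsCliqueSum H K) {o : G.Orientation}
    (hH : (o.comap H.hom).IsCyclic) (hK : (o.comap K.hom).IsCyclic) : o.IsCyclic :=
  fun _ _ hc => (h.support_subset_or_support_subset hc).elim
    (hH.isCyclicOn_of_support_subset h.isInduced_left hc)
    (hK.isCyclicOn_of_support_subset h.symm.isInduced_left hc)

theorem cyclicallyOrientable_iff (h : IsCliqueSum H K) (hedge : (H ⊓ K).edgeSet.Subsingleton) :
    G.CyclicallyOrientable ↔ H.coe.CyclicallyOrientable ∧ K.coe.CyclicallyOrientable := by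
  refine ⟨fun hG => ⟨hG.coe_of_isInduced h.isInduced_left,
    hG.coe_of_isInduced h.symm.isInduced_left⟩, ?_⟩
  rintro ⟨⟨oH, hoH⟩, oK, hoK⟩
  have hedge' : (H ⊓ K).coe.edgeSet.Subsingleton := by
    rw [Subgraph.edgeSet_coe]
    exact hedge.preimage (Sym2.map.injective Subtype.coe_injective)
  obtain ⟨oK', hoK', hagree⟩ : ∃ o : K.coe.Orientation, o.IsCyclic ∧
      oH.comap (Subgraph.inclusion inf_le_left : (H ⊓ K).coe →g H.coe) =
        o.comap (Subgraph.inclusion inf_le_right) := by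
    rcases Orientation.eq_or_eq_flip_of_subsingleton_edgeSet hedge' (oH.comap _) (oK.comap _) with
      heq | heq
    · exact ⟨oK, hoK, heq⟩
    · exact ⟨oK.flip, Orientation.IsCyclic.flip hoK, heq.trans (oK.flip_comap _).symm⟩
  obtain ⟨o, rfl, rfl⟩ := Orientation.exists_comap_hom_eq h.sup_eq_top oH oK' hagree
  exact ⟨o, h.isCyclic_of_comap_hom hoH hoK'⟩

end IsCliqueSum

theorem SimpleGraph.Subgraph.MeetAlongSingleEdge.isCliqueSum {G : SimpleGraph V}
    {H K : G.Subgraph} {x y : V} (hmeet : H.MeetAlongSingleEdge K x y) (hsup : H ⊔ K = ⊤) :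
    IsCliqueSum H K where
  sup_eq_top := hsup
  pairwise_adj_inf := by
    obtain ⟨-, hverts, hedges⟩ := hmeet
    have hxy : (H ⊓ K).Adj x y := by
      rw [← Subgraph.mem_edgeSet, hedges, Set.mem_singleton_iff]
    rw [hverts, Set.pairwise_pair]
    exact fun _ => ⟨hxy, hxy.symm⟩

theorem co_iff_co_of_decomposition_general {G : SimpleGraph V} {G' C : G.Subgraph} {x y : V}
    (hdec : G' ⊔ C = ⊤) (hmeet : G'.MeetAlongSingleEdge C x y) :
    G.CyclicallyOrientable ↔ G'.coe.CyclicallyOrientable ∧ C.coe.CyclicallyOrientable :=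
  (hmeet.isCliqueSum hdec).cyclicallyOrientable_iff
    (hmeet.2.2 ▸ Set.subsingleton_singleton)

/-- If `G = G' ∪ C` where `C` is a cycle and `G'` and `C` meet along
a single edge, then `G` is cyclically orientable iff `G'` is. -/
theorem co_iff_co_of_decomposition {V : Type*} [Fintype V] (G : SimpleGraph V)
    (G' C : G.Subgraph) (x y : V) (hdec : G' ⊔ C = ⊤) (hC : C.coe.IsCycleGraph)
    (hmeet : G'.MeetAlongSingleEdge C x y) :
    G.CyclicallyOrientable ↔ G'.coe.CyclicallyOrientable :=
  (co_iff_co_of_decomposition_general hdec hmeet).trans (and_iff_left hC.cyclicallyOrientable)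
end

section
/- Let G be a finite simple graph that decomposes as G = G' ∪ C, where C is a cycle, G' is a subgraph, and G' and C meet along exactly one common edge (x, y) (their intersection consists of the edge (x, y) and its two endpoints). Then every chordless cycle of G is either a chordless cycle of G' or is equal to C; in particular, every cycle of G that contains a vertex of C other than x and y and is not equal to C has a chord. -/
/-!
Let `c` be a chordless cycle of `G`. If all its vertices lie in `G'`, then `c ≤ G'`, because `G'` is
an induced subgraph: an edge of `C` with both ends in `G'` can only be `x y`.

Otherwise `c` passes through a vertex `w` outside `G'`. All edges of `G` at such a vertex belong to
`C`, where it has degree two, so `c` uses both edges of `C` there. Removing the edge `x y` from `C`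
leaves a path, and following it from `w` in both directions shows that `c` passes through every
vertex of `C`. As `c` is chordless it then contains `C`, and nested cycles are equal.
-/

open SimpleGraph

variable {V : Type*}

section

variable {G : SimpleGraph V} {G' C : G.Subgraph} {u v w x y z : V}

theorem subgraph_eq_of_le_of_neighborSet_subset {H K : G.Subgraph} (hle : H ≤ K)
    (hH : H.verts.Nonempty) (hK : K.Preconnected)
    (h : ∀ v ∈ H.verts, K.neighborSet v ⊆ H.neighborSet v) : H = K := by
  have hverts : K.verts ⊆ H.verts := by
    intro b hb
    by_contra hbH
    obtain ⟨a, ha⟩ := hH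
    obtain ⟨p⟩ := hK.coe ⟨a, hle.1 ha⟩ ⟨b, hb⟩
    obtain ⟨d, -, hfst, hsnd⟩ := p.exists_boundary_dart {u | u.1 ∈ H.verts} ha hbH
    exact hsnd (H.edge_vert (h d.fst hfst d.adj).symm)
  exact hle.antisymm ⟨hverts, fun a _ hab => h a (hverts (K.edge_vert hab)) hab⟩

theorem le_of_isInduced_of_verts_subset {H K : G.Subgraph} (hK : K.IsInduced)
    (h : H.verts ⊆ K.verts) : H ≤ K :=
  ⟨h, fun _ _ hab => hK (h (H.edge_vert hab)) (h (H.edge_vert hab.symm)) hab.adj_sub⟩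

theorem isInduced_left_of_sup_eq_top (hsup : G' ⊔ C = ⊤) (hinf : (G' ⊓ C).IsInduced) :
    G'.IsInduced := by
  intro a ha b hb hab
  have hor : (G' ⊔ C).Adj a b := by rwa [hsup]
  rcases hor with hG' | hC
  · exact hG'
  · exact (hinf ⟨ha, C.edge_vert hC⟩ ⟨hb, C.edge_vert hC.symm⟩ hab).1

theorem adj_right_of_sup_eq_top (hsup : G' ⊔ C = ⊤) (hu : u ∉ G'.verts) (huz : G.Adj u z) :
    C.Adj u z := by
  have hor : (G' ⊔ C).Adj u z := by rwa [hsup]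
  exact hor.resolve_left fun h => hu (G'.edge_vert h)

theorem inf_adj_of_meetAlongSingleEdge (h : G'.MeetAlongSingleEdge C x y) :
    (G' ⊓ C).Adj x y := by
  rw [← Subgraph.mem_edgeSet, h.2.2]
  rfl

theorem isInduced_inf_of_meetAlongSingleEdge (h : G'.MeetAlongSingleEdge C x y) :
    (G' ⊓ C).IsInduced := by
  have hxy := inf_adj_of_meetAlongSingleEdge h
  intro a ha b hb hab
  rw [h.2.1] at ha hb
  rcases ha with rfl | rfl <;> rcases hb with rfl | rfl
  exacts [(hab.ne rfl).elim, hxy, hxy.symm, (hab.ne rfl).elim]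

theorem notMem_verts_left_iff (hsup : G' ⊔ C = ⊤) (hmeet : G'.MeetAlongSingleEdge C x y) :
    w ∉ G'.verts ↔ w ∈ C.verts ∧ w ≠ x ∧ w ≠ y := by
  have hcup : w ∈ G'.verts ∨ w ∈ C.verts := by
    rw [← Set.mem_union, ← Subgraph.verts_sup, hsup]
    trivial
  have hcap : w ∈ G'.verts ∧ w ∈ C.verts ↔ w = x ∨ w = y := by
    rw [← Set.mem_inter_iff, ← Subgraph.verts_inf, hmeet.2.1]
    rfl
  tauto

theorem mem_of_isPath_of_forall_adj {p : G.Walk u v} (hp : p.IsPath) {S : Set V} (hu : u ∈ S)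
    (hS : ∀ a ∈ p.support, a ∈ S → a ≠ v → ∀ b, G.Adj a b → b ∈ S) (hz : z ∈ p.support) :
    z ∈ S := by
  induction p with
  | nil => exact List.mem_singleton.mp hz ▸ hu
  | @cons u u' v h p ih =>
    rw [Walk.cons_isPath_iff] at hp
    have huv : u ≠ v := fun huv => hp.2 (huv ▸ p.end_mem_support)
    rw [Walk.support_cons, List.mem_cons] at hz
    rcases hz with rfl | hz
    · exact hu
    · exact ih hp.1 (hS u (Walk.start_mem_support _) hu huv u' h)
        (fun a ha => hS a (List.mem_cons_of_mem _ ha)) hz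

theorem exists_isPath_of_isCycleGraph (hG : G.IsCycleGraph) (hxy : G.Adj x y) :
    ∃ p : G.Walk y x, p.IsPath ∧ ∀ w, w ∈ p.support := by
  classical
  obtain ⟨v, c, hc, hverts, hedges⟩ := hG
  have hadj : (c.rotate x (hverts x)).toSubgraph.Adj x y := by
    rw [Walk.toSubgraph_rotate, Walk.adj_toSubgraph_iff_mem_edges]
    exact hedges _ hxy
  obtain ⟨d, hd, rfl, hdc⟩ := (hc.rotate (hverts x)).exists_isCycle_snd_verts_eq hadj
  refine ⟨d.tail, hd.isPath_tail, fun w => ?_⟩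
  have hw : w ∈ d.support := by
    rw [← d.mem_verts_toSubgraph, hdc, Walk.toSubgraph_rotate, c.mem_verts_toSubgraph]
    exact hverts w
  rw [← d.cons_support_tail hd.not_nil, List.mem_cons] at hw
  rcases hw with rfl | hw
  · exact d.tail.end_mem_support
  · exact hw

theorem mem_of_isCycleGraph_of_forall_adj (hG : G.IsCycleGraph) (hxy : G.Adj x y) {S : Set V}
    (hS : ∀ a ∈ S, a ≠ x → a ≠ y → ∀ b, G.Adj a b → b ∈ S)
    (hw : w ∈ S) (hwx : w ≠ x) (hwy : w ≠ y) (z : V) : z ∈ S := by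
  obtain ⟨p, hp, hsupp⟩ := exists_isPath_of_isCycleGraph hG hxy
  obtain ⟨q, r, hq, hr, rfl⟩ := hp.mem_support_iff_exists_append.mp (hsupp w)
  have hxq : ∀ a ∈ q.support, a ≠ x := fun a ha =>
    hp.ne_of_mem_support_of_append hwx.symm ha r.end_mem_support
  have hyr : ∀ a ∈ r.support, a ≠ y := by
    rintro a ha rfl
    exact hp.ne_of_mem_support_of_append hwy.symm q.start_mem_support ha rfl
  rcases (Walk.mem_support_append_iff q r).mp (hsupp z) with hz | hz
  · refine mem_of_isPath_of_forall_adj hq.reverse hw (fun a ha haS hay => ?_) (by simpa using hz)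
    exact hS a haS (hxq a (by simpa using ha)) hay
  · exact mem_of_isPath_of_forall_adj hr hw (fun a ha haS hax => hS a haS hax (hyr a ha)) hz

theorem verts_subset_of_isCycleGraph_coe_of_forall_adj (hC : C.coe.IsCycleGraph) (hxy : C.Adj x y)
    {S : Set V} (hS : ∀ a ∈ S, a ≠ x → a ≠ y → ∀ b, C.Adj a b → b ∈ S)
    (hwC : w ∈ C.verts) (hw : w ∈ S) (hwx : w ≠ x) (hwy : w ≠ y) : C.verts ⊆ S := by
  intro z hz
  have hxy' : C.coe.Adj ⟨x, C.edge_vert hxy⟩ ⟨y, C.edge_vert hxy.symm⟩ := hxy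
  exact mem_of_isCycleGraph_of_forall_adj (S := {a | a.1 ∈ S}) (w := ⟨w, hwC⟩) hC hxy'
    (fun a ha hax hay b => hS a ha (Subtype.coe_ne_coe.mpr hax) (Subtype.coe_ne_coe.mpr hay) b)
    hw (Subtype.coe_ne_coe.mp hwx) (Subtype.coe_ne_coe.mp hwy) ⟨z, hz⟩

theorem exists_isCycle_toSubgraph_eq (hC : C.coe.IsCycleGraph) :
    ∃ (v : V) (d : G.Walk v v), d.IsCycle ∧ d.toSubgraph = C := by
  obtain ⟨v, d, hd, hverts, hedges⟩ := hC
  have htop : d.toSubgraph = ⊤ :=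
    top_le_iff.mp ⟨fun w _ => d.mem_verts_toSubgraph.mpr (hverts w),
      fun _ _ hab => Walk.adj_toSubgraph_iff_mem_edges.mpr (hedges _ hab)⟩
  refine ⟨C.hom v, d.map C.hom, hd.map C.hom_injective, ?_⟩
  rw [Walk.toSubgraph_map, htop]
  ext a b <;> simp

theorem neighborSet_toSubgraph_eq_of_subset {c : G.Walk u u} {d : G.Walk v v} (hc : c.IsCycle)
    (hd : d.IsCycle) (hwc : w ∈ c.support) (hwd : w ∈ d.support)
    (h : c.toSubgraph.neighborSet w ⊆ d.toSubgraph.neighborSet w) :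
    c.toSubgraph.neighborSet w = d.toSubgraph.neighborSet w := by
  refine Set.eq_of_subset_of_ncard_le h ?_ d.finite_neighborSet_toSubgraph
  rw [hc.ncard_neighborSet_toSubgraph_eq_two hwc, hd.ncard_neighborSet_toSubgraph_eq_two hwd]

theorem toSubgraph_eq_of_le {c : G.Walk u u} {d : G.Walk v v} (hc : c.IsCycle) (hd : d.IsCycle)
    (h : c.toSubgraph ≤ d.toSubgraph) : c.toSubgraph = d.toSubgraph := by
  refine subgraph_eq_of_le_of_neighborSet_subset h ⟨u, c.start_mem_verts_toSubgraph⟩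
    d.toSubgraph_connected.preconnected fun w hw => ?_
  exact (neighborSet_toSubgraph_eq_of_subset hc hd (c.mem_verts_toSubgraph.mp hw)
    (d.mem_verts_toSubgraph.mp (h.1 hw)) fun _ hz => h.2 hz).ge

theorem isInduced_toSubgraph_of_isChordlessCycle {c : G.Walk v v} (hc : c.IsChordlessCycle) :
    c.toSubgraph.IsInduced := by
  intro a ha b hb hab
  rw [c.mem_verts_toSubgraph] at ha hb
  exact Walk.adj_toSubgraph_iff_mem_edges.mpr (hc.2 a b ha hb hab)

theorem toSubgraph_eq_of_isChordlessCycle_of_notMem (hsup : G' ⊔ C = ⊤) (hC : C.coe.IsCycleGraph)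
    (hmeet : G'.MeetAlongSingleEdge C x y) {c : G.Walk v v} (hc : c.IsChordlessCycle)
    (hwc : w ∈ c.support) (hwG' : w ∉ G'.verts) : c.toSubgraph = C := by
  obtain ⟨u, d, hd, hdC⟩ := exists_isCycle_toSubgraph_eq hC
  have hstep : ∀ a ∈ c.support, a ∉ G'.verts → ∀ b, C.Adj a b → b ∈ c.support := by
    intro a hac haG' b hab
    rw [← hdC] at hab
    have hnbhd : c.toSubgraph.neighborSet a = d.toSubgraph.neighborSet a :=
      neighborSet_toSubgraph_eq_of_subset hc.1 hd hac (Walk.mem_support_of_adj_toSubgraph hab)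
        fun z hz => hdC ▸ adj_right_of_sup_eq_top hsup haG' hz.adj_sub
    have hab' : b ∈ c.toSubgraph.neighborSet a := hnbhd ▸ hab
    exact Walk.mem_support_of_adj_toSubgraph hab'.symm
  have hverts : C.verts ⊆ c.toSubgraph.verts := by
    intro z hz
    obtain ⟨hwC, hwx, hwy⟩ := (notMem_verts_left_iff hsup hmeet).mp hwG'
    refine c.mem_verts_toSubgraph.mpr (verts_subset_of_isCycleGraph_coe_of_forall_adj hC
      (inf_adj_of_meetAlongSingleEdge hmeet).2 (S := {a | a ∈ c.support}) ?_ hwC hwc hwx hwy hz)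
    intro a hac hax hay b hab
    exact hstep a hac ((notMem_verts_left_iff hsup hmeet).mpr ⟨C.edge_vert hab, hax, hay⟩) b hab
  have hle : d.toSubgraph ≤ c.toSubgraph :=
    hdC ▸ le_of_isInduced_of_verts_subset (isInduced_toSubgraph_of_isChordlessCycle hc) hverts
  exact (toSubgraph_eq_of_le hd hc.1 hle).symm.trans hdC

end

theorem chordlessCycles_of_decomposition_general {V : Type*} (G : SimpleGraph V)
    (G' C : G.Subgraph) (x y : V) (hdec : G' ⊔ C = ⊤) (hC : C.coe.IsCycleGraph)
    (hmeet : G'.MeetAlongSingleEdge C x y) :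
    (∀ (v : V) (c : G.Walk v v), c.IsChordlessCycle →
      (c.toSubgraph ≤ G' ∨ c.toSubgraph = C)) ∧
    (∀ (v : V) (c : G.Walk v v), c.IsCycle →
      (∃ w ∈ c.support, w ∈ C.verts ∧ w ≠ x ∧ w ≠ y) → c.toSubgraph ≠ C →
      ∃ u w : V, u ∈ c.support ∧ w ∈ c.support ∧ G.Adj u w ∧ s(u, w) ∉ c.edges) := by
  refine ⟨fun v c hc => ?_, fun v c hc hw hne => ?_⟩
  · by_cases hsub : c.toSubgraph.verts ⊆ G'.verts
    · have hG' : G'.IsInduced :=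
        isInduced_left_of_sup_eq_top hdec (isInduced_inf_of_meetAlongSingleEdge hmeet)
      exact .inl (le_of_isInduced_of_verts_subset hG' hsub)
    · obtain ⟨w, hwc, hwG'⟩ := Set.not_subset.mp hsub
      exact .inr (toSubgraph_eq_of_isChordlessCycle_of_notMem hdec hC hmeet hc
        (c.mem_verts_toSubgraph.mp hwc) hwG')
  · obtain ⟨w, hwc, hw⟩ := hw
    by_contra! hchordless
    exact hne (toSubgraph_eq_of_isChordlessCycle_of_notMem hdec hC hmeet ⟨hc, hchordless⟩ hwc
      ((notMem_verts_left_iff hdec hmeet).mpr hw))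

/-- If `G = G' ∪ C` where `C` is a cycle meeting `G'` along the
single edge `(x, y)`, then every chordless cycle of `G` is a chordless cycle of
`G'` or equals `C`; in particular, every cycle of `G` containing a vertex of `C`
other than `x` and `y` and not equal to `C` has a chord. -/
theorem chordlessCycles_of_decomposition {V : Type*} [Fintype V] (G : SimpleGraph V)
    (G' C : G.Subgraph) (x y : V) (hdec : G' ⊔ C = ⊤) (hC : C.coe.IsCycleGraph)
    (hmeet : G'.MeetAlongSingleEdge C x y) :
    (∀ (v : V) (c : G.Walk v v), c.IsChordlessCycle →
      (c.toSubgraph ≤ G' ∨ c.toSubgraph = C)) ∧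
    (∀ (v : V) (c : G.Walk v v), c.IsCycle →
      (∃ w ∈ c.support, w ∈ C.verts ∧ w ≠ x ∧ w ≠ y) → c.toSubgraph ≠ C →
      ∃ u w : V, u ∈ c.support ∧ w ∈ c.support ∧ G.Adj u w ∧ s(u, w) ∉ c.edges) :=
  chordlessCycles_of_decomposition_general G G' C x y hdec hC hmeet
end
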